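/- Let ω and ν be radial weights. Then P_ω : L^∞_ν̂ → H^∞_ν̂ is bounded if and only if sup_{a∈𝔻} ν̂(a) ∫_𝔻 |B^ω_a(ζ)| (ω(ζ)/ν̂(ζ)) dA(ζ) < ∞. -/

import Mathlib

open MeasureTheory Set Complex
open scoped ENNReal

noncomputable section

/-- The open unit disc in the complex plane. -/
def unitDisc : Set ℂ := Metric.ball 0 1

/-- Tail integral `ω̂(r) = ∫_r^1 ω(s) ds`. -/
def tl (ω : ℝ → ℝ) (r : ℝ) : ℝ := ∫ s in r..1, ω s

/-- Moment `ω_x = ∫_0^1 s^x ω(s) ds` (real power in the exponent). -/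
def mom (ω : ℝ → ℝ) (x : ℝ) : ℝ := ∫ s in (0:ℝ)..1, s ^ x * ω s

/-- `ω` is a radial weight: nonnegative and integrable on `[0,1)`, with positive
tail integrals. -/
def IsRadialWeight (ω : ℝ → ℝ) : Prop :=
  (∀ s ∈ Ico (0:ℝ) 1, 0 ≤ ω s) ∧ IntegrableOn ω (Ico (0:ℝ) 1) ∧
    ∀ r ∈ Ico (0:ℝ) 1, 0 < tl ω r

/-- The upper doubling class `D̂`: `sup_{0≤r<1} ω̂(r)/ω̂((1+r)/2) < ∞`. -/
def Dhat (ω : ℝ → ℝ) : Prop :=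
  ∃ C : ℝ, ∀ r ∈ Ico (0:ℝ) 1, tl ω r ≤ C * tl ω ((1 + r) / 2)

/-- The class `Ď`: there are `K > 1`, `C > 1` with `ω̂(r) ≥ C ω̂(1 - (1-r)/K)`. -/
def Dcheck (ω : ℝ → ℝ) : Prop :=
  ∃ K C : ℝ, 1 < K ∧ 1 < C ∧ ∀ r ∈ Ico (0:ℝ) 1, C * tl ω (1 - (1 - r) / K) ≤ tl ω r

/-- The class `D = D̂ ∩ Ď`. -/
def DD (ω : ℝ → ℝ) : Prop := Dhat ω ∧ Dcheck ω

/-- The Bergman reproducing kernel `B^ω_z(ζ) = Σ_n (conj z · ζ)^n / (2 ω_{2n+1})`. -/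
def bKer (ω : ℝ → ℝ) (z ζ : ℂ) : ℂ :=
  ∑' n : ℕ, (starRingEnd ℂ z * ζ) ^ n / ((2 * mom ω (2 * (n : ℝ) + 1) : ℝ) : ℂ)

/-- The integrand of the Bergman projection. -/
def bInt (ω : ℝ → ℝ) (f : ℂ → ℂ) (z ζ : ℂ) : ℂ :=
  f ζ * starRingEnd ℂ (bKer ω z ζ) * ((ω ‖ζ‖ : ℝ) : ℂ)

/-- The Bergman projection `P_ω f(z) = ∫_𝔻 f(ζ) conj(B^ω_z(ζ)) ω(ζ) dA(ζ)`,
where `dA` is normalized area measure `dx dy / π`. -/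
def bProj (ω : ℝ → ℝ) (f : ℂ → ℂ) (z : ℂ) : ℂ :=
  (Real.pi : ℂ)⁻¹ * ∫ ζ in unitDisc, bInt ω f z ζ

/-- The weighted sup-norm `ess sup_{z ∈ 𝔻} |f(z)| v(|z|)`, valued in `ℝ≥0∞`. -/
def wSup (v : ℝ → ℝ) (f : ℂ → ℂ) : ℝ≥0∞ :=
  essSup (fun z => ENNReal.ofReal (‖f z‖ * v ‖z‖)) (volume.restrict unitDisc)

/-- `P_ω : L^∞_v → H^∞_v` is bounded: there is `C > 0` so that for every
`f ∈ L^∞_v` the defining integral converges absolutely at every point of `𝔻`,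
`P_ω f` is analytic on `𝔻`, and `‖P_ω f‖_{L^∞_v} ≤ C ‖f‖_{L^∞_v}`. -/
def ProjBddH (ω v : ℝ → ℝ) : Prop :=
  ∃ C : ℝ, 0 < C ∧ ∀ f : ℂ → ℂ,
    AEStronglyMeasurable f (volume.restrict unitDisc) → wSup v f < ⊤ →
    (∀ z ∈ unitDisc, IntegrableOn (bInt ω f z) unitDisc) ∧
    DifferentiableOn ℂ (bProj ω f) unitDisc ∧
    wSup v (bProj ω f) ≤ ENNReal.ofReal C * wSup v f

/-- `P_ω : L^∞_v → B^∞_v` is bounded: there is `C > 0` so that for every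
`f ∈ L^∞_v` the defining integral converges absolutely at every point of `𝔻`,
`P_ω f` is analytic on `𝔻`, and `‖P_ω f‖_{B^∞_v} ≤ C ‖f‖_{L^∞_v}`. -/
def ProjBddB (ω v : ℝ → ℝ) : Prop :=
  ∃ C : ℝ, 0 < C ∧ ∀ f : ℂ → ℂ,
    AEStronglyMeasurable f (volume.restrict unitDisc) → wSup v f < ⊤ →
    (∀ z ∈ unitDisc, IntegrableOn (bInt ω f z) unitDisc) ∧
    DifferentiableOn ℂ (bProj ω f) unitDisc ∧
    ∀ z ∈ unitDisc,
      ENNReal.ofReal ((1 - ‖z‖) * v ‖z‖ * ‖deriv (bProj ω f) z‖) ≤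
        ENNReal.ofReal C * wSup v f

/-- The moment condition `sup_{x ≥ 0} (ν_x / ω_{2x}) (ω/ν̂)_x < ∞`. -/
def MomCond (ω ν : ℝ → ℝ) : Prop :=
  ∃ C : ℝ, ∀ x : ℝ, 0 ≤ x →
    mom ν x / mom ω (2 * x) * mom (fun s => ω s / tl ν s) x ≤ C

/-- The tail condition `sup_{0 ≤ r < 1} (ν̂(r)/ω̂(r)) ∫_r^1 ω(s)/ν̂(s) ds < ∞`. -/
def TailCond (ω ν : ℝ → ℝ) : Prop :=
  ∃ C : ℝ, ∀ r ∈ Ico (0:ℝ) 1, tl ν r / tl ω r * tl (fun s => ω s / tl ν s) r ≤ C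


lemma rw_int {ω : ℝ → ℝ} (hω : IsRadialWeight ω) : IntegrableOn ω (Icc (0:ℝ) 1) :=
  (integrableOn_Icc_iff_integrableOn_Ico).2 hω.2.1

lemma rw_ii {ω : ℝ → ℝ} (hω : IsRadialWeight ω) {r : ℝ} (hr : r ∈ Ico (0:ℝ) 1) :
    IntervalIntegrable ω volume r 1 := by
  apply IntegrableOn.intervalIntegrable
  rw [uIcc_of_le hr.2.le]
  exact (rw_int hω).mono_set (Icc_subset_Icc_left hr.1)

lemma mom_lower {ω : ℝ → ℝ} (hω : IsRadialWeight ω) {r : ℝ} (hr : r ∈ Ico (0:ℝ) 1)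
    {x : ℝ} (hx : 0 ≤ x) : r ^ x * tl ω r ≤ mom ω x := by
  have hc : Continuous (fun s : ℝ => s ^ x) := Real.continuous_rpow_const hx
  have h0 := (rw_ii hω (r := 0) (by simp)).continuousOn_mul (g := fun s : ℝ => s ^ x)
    hc.continuousOn
  have hr1 := (rw_ii hω hr).continuousOn_mul (g := fun s : ℝ => s ^ x) hc.continuousOn
  have h0r : IntervalIntegrable (fun s => s ^ x * ω s) volume 0 r := by
    apply h0.mono_set
    rw [uIcc_of_le hr.1, uIcc_of_le zero_le_one]
    exact Icc_subset_Icc_right hr.2.le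
  unfold mom tl
  rw [← intervalIntegral.integral_add_adjacent_intervals h0r hr1,
    ← intervalIntegral.integral_const_mul]
  have A : 0 ≤ ∫ s in (0:ℝ)..r, s ^ x * ω s := by
    apply intervalIntegral.integral_nonneg hr.1
    intro u hu
    exact mul_nonneg (Real.rpow_nonneg hu.1 _) (hω.1 u ⟨hu.1, hu.2.trans_lt hr.2⟩)
  have B : ∫ s in r..1, r ^ x * ω s ≤ ∫ s in r..1, s ^ x * ω s := by
    apply intervalIntegral.integral_mono_on_of_le_Ioo hr.2.le ((rw_ii hω hr).const_mul _) hr1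
    intro u hu
    apply mul_le_mul_of_nonneg_right _ (hω.1 u ⟨hr.1.trans hu.1.le, hu.2⟩)
    exact Real.rpow_le_rpow hr.1 hu.1.le hx
  linarith

lemma mom_pos {ω : ℝ → ℝ} (hω : IsRadialWeight ω) {x : ℝ} (hx : 0 ≤ x) : 0 < mom ω x := by
  have hr : (1/2 : ℝ) ∈ Ico (0:ℝ) 1 := by constructor <;> norm_num
  have := mom_lower hω hr hx
  have h2 := hω.2.2 _ hr
  have : 0 < (1/2:ℝ) ^ x * tl ω (1/2) := by positivity
  linarith

lemma mom_pos' {ω : ℝ → ℝ} (hω : IsRadialWeight ω) (n : ℕ) :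
    0 < mom ω (2 * (n : ℝ) + 1) := mom_pos hω (by positivity)

lemma ker_summable {ω : ℝ → ℝ} (hω : IsRadialWeight ω) {ρ : ℝ} (h0 : 0 ≤ ρ) (h1 : ρ < 1) :
    Summable (fun n : ℕ => ρ ^ n / (2 * mom ω (2 * (n : ℝ) + 1))) := by
  obtain ⟨r, hr0, hr1⟩ : ∃ r : ℝ, √ρ < r ∧ r < 1 :=
    exists_between (by rw [Real.sqrt_lt' one_pos]; simpa using h1)
  have hrpos : 0 < r := (Real.sqrt_nonneg _).trans_lt hr0
  have hρr : ρ < r ^ 2 := (Real.sqrt_lt' hrpos).1 hr0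
  have ht := hω.2.2 r ⟨hrpos.le, hr1⟩
  have hg : Summable (fun n : ℕ => (ρ / r ^ 2) ^ n * (2 * (r * tl ω r))⁻¹) :=
    (summable_geometric_of_lt_one (by positivity)
      ((div_lt_one (by positivity)).2 hρr)).mul_right _
  refine Summable.of_nonneg_of_le (fun n => ?_) (fun n => ?_) hg
  · have := mom_pos' hω n
    positivity
  · have h := mom_lower hω ⟨hrpos.le, hr1⟩ (x := 2 * (n : ℝ) + 1) (by positivity)
    have e : r ^ (2 * (n:ℝ) + 1) = (r ^ 2) ^ n * r := by
      rw [Real.rpow_add hrpos, Real.rpow_one, ← pow_mul]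
      congr 1
      rw [← Real.rpow_natCast]; push_cast; rfl
    rw [e] at h
    calc ρ ^ n / (2 * mom ω (2 * (n : ℝ) + 1)) ≤ ρ ^ n / (2 * ((r ^ 2) ^ n * r * tl ω r)) := by
          gcongr
      _ = _ := by
          rw [div_pow]; field_simp

lemma term_norm {ω : ℝ → ℝ} (hω : IsRadialWeight ω) (n : ℕ) (w : ℂ) :
    ‖w ^ n / ((2 * mom ω (2 * (n : ℝ) + 1) : ℝ) : ℂ)‖ =
      ‖w‖ ^ n / (2 * mom ω (2 * (n : ℝ) + 1)) := by
  have := mom_pos' hω n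
  rw [norm_div, norm_pow, Complex.norm_real, Real.norm_of_nonneg (by positivity)]

lemma mem_ud {z : ℂ} : z ∈ unitDisc ↔ ‖z‖ < 1 := by simp [unitDisc]

lemma ud_meas : MeasurableSet unitDisc := Metric.isOpen_ball.measurableSet

lemma term_le {ω : ℝ → ℝ} (hω : IsRadialWeight ω) (n : ℕ) (z ζ : ℂ) {ρ : ℝ} (hz : ‖z‖ ≤ ρ)
    (hζ : ζ ∈ unitDisc) :
    ‖(starRingEnd ℂ z * ζ) ^ n / ((2 * mom ω (2 * (n : ℝ) + 1) : ℝ) : ℂ)‖ ≤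
      ρ ^ n / (2 * mom ω (2 * (n : ℝ) + 1)) := by
  have := mom_pos' hω n
  rw [term_norm hω]
  gcongr
  rw [norm_mul, RCLike.norm_conj]
  have := mem_ud.1 hζ
  nlinarith [norm_nonneg z]

lemma ker_hasSum {ω : ℝ → ℝ} (hω : IsRadialWeight ω) {z ζ : ℂ} (hz : z ∈ unitDisc)
    (hζ : ζ ∈ unitDisc) :
    HasSum (fun n : ℕ => (starRingEnd ℂ z * ζ) ^ n /
      ((2 * mom ω (2 * (n : ℝ) + 1) : ℝ) : ℂ)) (bKer ω z ζ) :=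
  (Summable.of_norm_bounded (ker_summable hω (norm_nonneg z) (mem_ud.1 hz))
    (fun n => term_le hω n z ζ le_rfl hζ)).hasSum

lemma ker_cont {ω : ℝ → ℝ} (hω : IsRadialWeight ω) {z : ℂ} (hz : z ∈ unitDisc) :
    ContinuousOn (bKer ω z) unitDisc := by
  unfold bKer
  refine continuousOn_tsum (fun n => ?_) (ker_summable hω (norm_nonneg z) (mem_ud.1 hz))
    (fun n ζ hζ => term_le hω n z ζ le_rfl hζ)
  exact (((continuous_const.mul continuous_id).pow n).div_const _).continuousOn

lemma tl_cont {ν : ℝ → ℝ} (hν : IsRadialWeight ν) :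
    ContinuousOn (fun ζ : ℂ => tl ν ‖ζ‖) unitDisc := by
  have h : ContinuousOn (tl ν) (uIcc 0 1) := by
    unfold tl
    apply intervalIntegral.continuousOn_primitive_interval_left
    rw [uIcc_of_le zero_le_one]; exact rw_int hν
  rw [uIcc_of_le zero_le_one] at h
  exact h.comp continuous_norm.continuousOn fun ζ hζ => ⟨norm_nonneg _, (mem_ud.1 hζ).le⟩

lemma tl_pos' {ν : ℝ → ℝ} (hν : IsRadialWeight ν) {ζ : ℂ} (hζ : ζ ∈ unitDisc) : 0 < tl ν ‖ζ‖ :=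
  hν.2.2 _ ⟨norm_nonneg _, mem_ud.1 hζ⟩

lemma rw_nonneg {ν : ℝ → ℝ} (hν : IsRadialWeight ν) {ζ : ℂ} (hζ : ζ ∈ unitDisc) : 0 ≤ ν ‖ζ‖ :=
  hν.1 _ ⟨norm_nonneg _, mem_ud.1 hζ⟩

lemma rw_aesm {ω : ℝ → ℝ} (hω : IsRadialWeight ω) :
    AEStronglyMeasurable (fun ζ : ℂ => ω ‖ζ‖) (volume.restrict unitDisc) := by
  have h : IntegrableOn (fun ζ : ℂ => ω ‖ζ‖) (Metric.ball 0 1) := by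
    rw [integrableOn_fun_norm_addHaar (volume : Measure ℂ)]
    rw [Complex.finrank_real_complex]
    have := (rw_int hω).continuousOn_mul (g := fun y : ℝ => y ^ (2 - 1))
      (continuous_pow _).continuousOn isCompact_Icc
    exact this.mono_set Ioo_subset_Icc_self
  exact h.aestronglyMeasurable

lemma bInt_aesm {ω : ℝ → ℝ} (hω : IsRadialWeight ω) {f : ℂ → ℂ}
    (hf : AEStronglyMeasurable f (volume.restrict unitDisc)) {z : ℂ} (hz : z ∈ unitDisc) :
    AEStronglyMeasurable (bInt ω f z) (volume.restrict unitDisc) := by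
  unfold bInt
  have h1 := (ker_cont hω hz).aestronglyMeasurable (μ := volume) ud_meas
  exact (hf.mul (Complex.continuous_conj.comp_aestronglyMeasurable h1)).mul
    (Complex.continuous_ofReal.comp_aestronglyMeasurable (rw_aesm hω))

lemma quot_aesm {ω ν : ℝ → ℝ} (hω : IsRadialWeight ω) (hν : IsRadialWeight ν) :
    AEStronglyMeasurable (fun ζ : ℂ => ω ‖ζ‖ / tl ν ‖ζ‖) (volume.restrict unitDisc) :=
  (rw_aesm hω).div₀ ((tl_cont hν).aestronglyMeasurable ud_meas)

lemma wSup_ae {v : ℝ → ℝ} {f : ℂ → ℂ} (h : wSup v f < ⊤) :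
    ∀ᵐ ζ ∂(volume.restrict unitDisc), ‖f ζ‖ * v ‖ζ‖ ≤ (wSup v f).toReal := by
  filter_upwards [ENNReal.ae_le_essSup
    (μ := volume.restrict unitDisc) (fun z => ENNReal.ofReal (‖f z‖ * v ‖z‖))] with ζ hζ
  exact (ENNReal.ofReal_le_iff_le_toReal h.ne).1 hζ

lemma g_aesm {ω ν : ℝ → ℝ} (hω : IsRadialWeight ω) (hν : IsRadialWeight ν)
    {a : ℂ} (ha : a ∈ unitDisc) :
    AEStronglyMeasurable (fun ζ : ℂ => ‖bKer ω a ζ‖ * (ω ‖ζ‖ / tl ν ‖ζ‖))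
      (volume.restrict unitDisc) :=
  ((ker_cont hω ha).aestronglyMeasurable ud_meas).norm.mul (quot_aesm hω hν)

lemma g_nonneg {ω ν : ℝ → ℝ} (hω : IsRadialWeight ω) (hν : IsRadialWeight ν) (a : ℂ) :
    ∀ᵐ ζ ∂(volume.restrict unitDisc), 0 ≤ ‖bKer ω a ζ‖ * (ω ‖ζ‖ / tl ν ‖ζ‖) := by
  filter_upwards [ae_restrict_mem ud_meas] with ζ hζ
  have := tl_pos' hν hζ
  have := rw_nonneg hω hζ
  positivity

lemma bKer_zero {ω : ℝ → ℝ} (ζ : ℂ) :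
    bKer ω 0 ζ = 1 / ((2 * mom ω 1 : ℝ) : ℂ) := by
  unfold bKer
  rw [tsum_eq_single 0]
  · simp
  · intro n hn
    simp [hn]

lemma bInt_le {ω ν : ℝ → ℝ} (hω : IsRadialWeight ω) (hν : IsRadialWeight ν) {f : ℂ → ℂ}
    (hf : wSup (tl ν) f < ⊤) (z : ℂ) :
    ∀ᵐ ζ ∂(volume.restrict unitDisc), ‖bInt ω f z ζ‖ ≤
      (wSup (tl ν) f).toReal * (‖bKer ω z ζ‖ * (ω ‖ζ‖ / tl ν ‖ζ‖)) := by
  filter_upwards [wSup_ae hf, ae_restrict_mem ud_meas] with ζ h hζ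
  have h1 := tl_pos' hν hζ
  have h2 := rw_nonneg hω hζ
  unfold bInt
  rw [norm_mul, norm_mul, RCLike.norm_conj, Complex.norm_real, Real.norm_of_nonneg h2]
  calc ‖f ζ‖ * ‖bKer ω z ζ‖ * ω ‖ζ‖
      = (‖f ζ‖ * tl ν ‖ζ‖) * (‖bKer ω z ζ‖ * (ω ‖ζ‖ / tl ν ‖ζ‖)) := by field_simp
    _ ≤ _ := by gcongr

lemma proj_diff {ω ν : ℝ → ℝ} (hω : IsRadialWeight ω) (hν : IsRadialWeight ν)
    (hq : IntegrableOn (fun ζ : ℂ => ω ‖ζ‖ / tl ν ‖ζ‖) unitDisc) {f : ℂ → ℂ}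
    (hfm : AEStronglyMeasurable f (volume.restrict unitDisc))
    (hf : wSup (tl ν) f < ⊤) : DifferentiableOn ℂ (bProj ω f) unitDisc := by
  set M := (wSup (tl ν) f).toReal with hM
  have hM0 : 0 ≤ M := ENNReal.toReal_nonneg
  set q : ℂ → ℝ := fun ζ : ℂ => ω ‖ζ‖ / tl ν ‖ζ‖ with hqdef
  let m : ℕ → ℝ := fun n => mom ω (2 * (n : ℝ) + 1)
  have hm : ∀ n, 0 < m n := fun n => mom_pos' hω n
  let F : ℕ → ℂ → ℂ := fun n ζ => f ζ * starRingEnd ℂ ζ ^ n * ((ω ‖ζ‖ : ℝ) : ℂ)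
  have hFm : ∀ n, AEStronglyMeasurable (F n) (volume.restrict unitDisc) := fun n =>
    (hfm.mul ((Complex.continuous_conj.pow n).aestronglyMeasurable)).mul
      (Complex.continuous_ofReal.comp_aestronglyMeasurable (rw_aesm hω))
  have hFle : ∀ n, ∀ᵐ ζ ∂(volume.restrict unitDisc), ‖F n ζ‖ ≤ M * q ζ := by
    intro n
    filter_upwards [wSup_ae hf, ae_restrict_mem ud_meas] with ζ h hζ
    have h1 := tl_pos' hν hζ
    have h2 := rw_nonneg hω hζ
    have h3 : ‖ζ‖ ^ n ≤ 1 := pow_le_one₀ (norm_nonneg _) (mem_ud.1 hζ).le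
    simp only [F]
    rw [norm_mul, norm_mul, norm_pow, RCLike.norm_conj, Complex.norm_real,
      Real.norm_of_nonneg h2]
    calc ‖f ζ‖ * ‖ζ‖ ^ n * ω ‖ζ‖ ≤ ‖f ζ‖ * 1 * ω ‖ζ‖ := by gcongr
      _ = (‖f ζ‖ * tl ν ‖ζ‖) * q ζ := by simp only [hqdef]; field_simp
      _ ≤ _ := by
        have : 0 ≤ q ζ := by simp only [hqdef]; positivity
        gcongr
  have hFi : ∀ n, IntegrableOn (F n) unitDisc := fun n =>
    Integrable.mono' (hq.const_mul M) (hFm n) (hFle n)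
  let c : ℕ → ℂ := fun n => ∫ ζ in unitDisc, F n ζ
  have hc : ∀ n, ‖c n‖ ≤ ∫ ζ in unitDisc, M * q ζ := fun n =>
    norm_integral_le_of_norm_le (hq.const_mul M) (hFle n)
  set A := ∫ ζ in unitDisc, M * q ζ
  have key : ∀ z ∈ unitDisc, HasSum (fun n => z ^ n / ((2 * m n : ℝ) : ℂ) * c n)
      (∫ ζ in unitDisc, bInt ω f z ζ) := by
    intro z hz
    have hs := ker_summable hω (norm_nonneg z) (mem_ud.1 hz)
    have := hasSum_integral_of_dominated_convergence (μ := volume.restrict unitDisc)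
      (F := fun n ζ => z ^ n / ((2 * m n : ℝ) : ℂ) * F n ζ) (f := bInt ω f z)
      (fun n ζ => ‖z‖ ^ n / (2 * m n) * (M * q ζ))
      (fun n => (hFm n).const_mul _)
      (fun n => by
        filter_upwards [hFle n] with ζ h
        rw [norm_mul, term_norm hω]
        have := hm n
        exact mul_le_mul_of_nonneg_left h (by positivity))
      (Filter.Eventually.of_forall fun ζ => hs.mul_right _)
      (by
        simp only [tsum_mul_right]
        exact (hq.const_mul M).const_mul _)
      (by
        filter_upwards [ae_restrict_mem ud_meas] with ζ hζ
        have h1 := (Complex.hasSum_conj'.2 (ker_hasSum hω hz hζ))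
        have h2 := (h1.mul_left (f ζ)).mul_right ((ω ‖ζ‖ : ℝ) : ℂ)
        unfold bInt
        convert! h2 using 2 with n
        simp only [F, m, map_div₀, map_pow, map_mul, Complex.conj_conj, Complex.conj_ofReal,
          mul_pow]
        ring)
    simpa only [integral_const_mul] using this
  intro z hz
  obtain ⟨ρ, h1, h2⟩ := exists_between (mem_ud.1 hz)
  have hρ0 : 0 ≤ ρ := (norm_nonneg z).trans h1.le
  have hd : DifferentiableOn ℂ (fun w => ∑' n, w ^ n / ((2 * m n : ℝ) : ℂ) * c n)
      (Metric.ball 0 ρ) := by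
    refine differentiableOn_tsum_of_summable_norm
      (u := fun n => ρ ^ n / (2 * m n) * A) ((ker_summable hω hρ0 h2).mul_right _)
      (fun n => ?_) Metric.isOpen_ball (fun n w hw => ?_)
    · fun_prop
    · have := hm n
      rw [norm_mul, term_norm hω]
      have hw' : ‖w‖ ≤ ρ := by simpa using (mem_ball_zero_iff.1 hw).le
      exact mul_le_mul (by gcongr) (hc n) (norm_nonneg _) (by positivity)
  have hd' : DifferentiableOn ℂ (bProj ω f) (Metric.ball 0 ρ) := by
    refine (hd.const_mul (Real.pi : ℂ)⁻¹).congr fun w hw => ?_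
    unfold bProj
    rw [(key w (mem_ud.2 ((mem_ball_zero_iff.1 hw).trans h2))).tsum_eq]
  exact (hd'.differentiableAt
    (Metric.isOpen_ball.mem_nhds (mem_ball_zero_iff.2 h1))).differentiableWithinAt

lemma bwd {ω ν : ℝ → ℝ} (hω : IsRadialWeight ω) (hν : IsRadialWeight ν) {C : ℝ}
    (hC : ∀ a ∈ unitDisc,
        ENNReal.ofReal (tl ν ‖a‖) *
          ∫⁻ ζ in unitDisc,
            ENNReal.ofReal (‖bKer ω a ζ‖ * (ω ‖ζ‖ / tl ν ‖ζ‖)) ≤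
        ENNReal.ofReal C) : ProjBddH ω (tl ν) := by
  have hgi : ∀ a ∈ unitDisc,
      IntegrableOn (fun ζ : ℂ => ‖bKer ω a ζ‖ * (ω ‖ζ‖ / tl ν ‖ζ‖)) unitDisc := by
    intro a ha
    refine ⟨g_aesm hω hν ha, ?_⟩
    rw [hasFiniteIntegral_iff_ofReal (g_nonneg hω hν a)]
    have h := (hC a ha).trans_lt ENNReal.ofReal_lt_top
    by_contra hcon
    rw [not_lt, top_le_iff] at hcon
    rw [hcon, ENNReal.mul_top] at h
    · exact lt_irrefl _ h
    · simpa using tl_pos' hν ha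
  have hgC : ∀ a ∈ unitDisc,
      tl ν ‖a‖ * ∫ ζ in unitDisc, ‖bKer ω a ζ‖ * (ω ‖ζ‖ / tl ν ‖ζ‖) ≤ max C 1 := by
    intro a ha
    have h := hC a ha
    rw [← ofReal_integral_eq_lintegral_ofReal (hgi a ha) (g_nonneg hω hν a),
      ← ENNReal.ofReal_mul (tl_pos' hν ha).le] at h
    exact (ENNReal.ofReal_le_ofReal_iff (by positivity)).1
      (h.trans (ENNReal.ofReal_le_ofReal (le_max_left C 1)))
  have h0 : (0:ℂ) ∈ unitDisc := mem_ud.2 (by simp)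
  have hm1 := mom_pos hω zero_le_one
  have hq : IntegrableOn (fun ζ : ℂ => ω ‖ζ‖ / tl ν ‖ζ‖) unitDisc := by
    have h := (hgi 0 h0).const_mul (2 * mom ω 1)
    refine h.congr (Filter.Eventually.of_forall fun ζ => ?_)
    simp only [bKer_zero, norm_div, norm_one, Complex.norm_real]
    rw [Real.norm_of_nonneg (by positivity)]
    field_simp
  have hC1 : 0 < max C 1 := by positivity
  refine ⟨Real.pi⁻¹ * max C 1, by positivity, fun f hfm hf => ⟨fun z hz => ?_,
    proj_diff hω hν hq hfm hf, ?_⟩⟩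
  · exact Integrable.mono' ((hgi z hz).const_mul _) (bInt_aesm hω hfm hz) (bInt_le hω hν hf z)
  · refine essSup_le_of_ae_le _ ?_
    filter_upwards [ae_restrict_mem ud_meas] with z hz
    have h1 : ‖∫ ζ in unitDisc, bInt ω f z ζ‖ ≤ _ :=
      norm_integral_le_of_norm_le ((hgi z hz).const_mul _) (bInt_le hω hν hf z)
    rw [integral_const_mul] at h1
    have h2 := hgC z hz
    have h3 := tl_pos' hν hz
    set M := (wSup (tl ν) f).toReal with hM
    have hM0 : 0 ≤ M := ENNReal.toReal_nonneg
    rw [← ENNReal.ofReal_toReal hf.ne, ← ENNReal.ofReal_mul (by positivity)]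
    apply ENNReal.ofReal_le_ofReal
    unfold bProj
    rw [norm_mul, norm_inv, Complex.norm_real, Real.norm_of_nonneg Real.pi_pos.le]
    set J := ∫ ζ in unitDisc, ‖bKer ω z ζ‖ * (ω ‖ζ‖ / tl ν ‖ζ‖)
    calc Real.pi⁻¹ * ‖∫ ζ in unitDisc, bInt ω f z ζ‖ * tl ν ‖z‖
        ≤ Real.pi⁻¹ * (M * J) * tl ν ‖z‖ := by gcongr
      _ = Real.pi⁻¹ * M * (tl ν ‖z‖ * J) := by ring
      _ ≤ Real.pi⁻¹ * M * max C 1 := by gcongr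
      _ = _ := by ring

lemma fwd {ω ν : ℝ → ℝ} (hω : IsRadialWeight ω) (hν : IsRadialWeight ν)
    (h : ProjBddH ω (tl ν)) : ∃ C : ℝ, ∀ a ∈ unitDisc,
        ENNReal.ofReal (tl ν ‖a‖) *
          ∫⁻ ζ in unitDisc,
            ENNReal.ofReal (‖bKer ω a ζ‖ * (ω ‖ζ‖ / tl ν ‖ζ‖)) ≤
        ENNReal.ofReal C := by
  obtain ⟨C, hC0, hC⟩ := h
  refine ⟨Real.pi * C, fun a ha => ?_⟩
  let f : ℂ → ℂ := fun ζ => bKer ω a ζ / ((‖bKer ω a ζ‖ * tl ν ‖ζ‖ : ℝ) : ℂ)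
  have hB := (ker_cont hω ha).aestronglyMeasurable (μ := volume) ud_meas
  have hT := (tl_cont hν).aestronglyMeasurable (μ := volume) ud_meas
  have hfm : AEStronglyMeasurable f (volume.restrict unitDisc) :=
    hB.div₀ (Complex.continuous_ofReal.comp_aestronglyMeasurable (hB.norm.mul hT))
  have hf1 : wSup (tl ν) f ≤ 1 := by
    refine essSup_le_of_ae_le _ ?_
    filter_upwards [ae_restrict_mem ud_meas] with ζ hζ
    have h3 := tl_pos' hν hζ
    rw [← ENNReal.ofReal_one]
    apply ENNReal.ofReal_le_ofReal
    simp only [f]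
    rw [norm_div, Complex.norm_real, Real.norm_of_nonneg (by positivity)]
    by_cases hb : ‖bKer ω a ζ‖ = 0
    · simp [hb]
    · field_simp; rfl
  obtain ⟨hI, hD, hW⟩ := hC f hfm (hf1.trans_lt ENNReal.one_lt_top)
  have hW' : wSup (tl ν) (bProj ω f) ≤ ENNReal.ofReal C :=
    hW.trans (by simpa using mul_le_mul_right hf1 (ENNReal.ofReal C))
  -- pointwise bound
  have hcont : ContinuousOn (fun z => ‖bProj ω f z‖ * tl ν ‖z‖) unitDisc :=
    hD.continuousOn.norm.mul (tl_cont hν)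
  have hpt : ‖bProj ω f a‖ * tl ν ‖a‖ ≤ C := by
    by_contra hcon
    have hopen : IsOpen (unitDisc ∩ (fun z => ‖bProj ω f z‖ * tl ν ‖z‖) ⁻¹' Ioi C) :=
      hcont.isOpen_inter_preimage Metric.isOpen_ball isOpen_Ioi
    have hpos := hopen.measure_pos volume ⟨a, ha, not_le.1 hcon⟩
    have hae : ∀ᵐ z ∂(volume.restrict unitDisc), ‖bProj ω f z‖ * tl ν ‖z‖ ≤ C := by
      filter_upwards [wSup_ae (hW'.trans_lt ENNReal.ofReal_lt_top)] with z hz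
      exact hz.trans (ENNReal.toReal_le_of_le_ofReal hC0.le hW')
    rw [ae_restrict_iff' ud_meas, ae_iff] at hae
    refine hpos.ne' (measure_mono_null (fun z hz => ?_) hae)
    simp only [mem_ofPred_eq, not_forall]
    exact ⟨hz.1, not_le.2 hz.2⟩
  -- the integrand
  have heq : ∀ ζ ∈ unitDisc, bInt ω f a ζ =
      ((‖bKer ω a ζ‖ * (ω ‖ζ‖ / tl ν ‖ζ‖) : ℝ) : ℂ) := by
    intro ζ hζ
    have h3 := tl_pos' hν hζ
    simp only [bInt, f]
    by_cases hb : bKer ω a ζ = 0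
    · simp [hb]
    · have hb' : (‖bKer ω a ζ‖ : ℂ) ≠ 0 := by simpa using hb
      have h3' : (tl ν ‖ζ‖ : ℂ) ≠ 0 := by exact_mod_cast h3.ne'
      have hmc := Complex.mul_conj' (bKer ω a ζ)
      push_cast
      field_simp
      rw [hmc]
  have hint : IntegrableOn (fun ζ : ℂ => ‖bKer ω a ζ‖ * (ω ‖ζ‖ / tl ν ‖ζ‖)) unitDisc := by
    have h1 := ((hI a ha).congr_fun heq ud_meas).re
    exact h1.congr (Filter.Eventually.of_forall fun ζ => by simp)
  rw [← ofReal_integral_eq_lintegral_ofReal hint (g_nonneg hω hν a),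
      ← ENNReal.ofReal_mul (tl_pos' hν ha).le]
  apply ENNReal.ofReal_le_ofReal
  have hJ : 0 ≤ ∫ ζ in unitDisc, ‖bKer ω a ζ‖ * (ω ‖ζ‖ / tl ν ‖ζ‖) :=
    integral_nonneg_of_ae (g_nonneg hω hν a)
  unfold bProj at hpt
  rw [setIntegral_congr_fun ud_meas heq, integral_complex_ofReal, norm_mul, norm_inv, Complex.norm_real,
    Real.norm_of_nonneg Real.pi_pos.le, Complex.norm_real, Real.norm_of_nonneg hJ] at hpt
  have hpi := Real.pi_pos
  set J := ∫ ζ in unitDisc, ‖bKer ω a ζ‖ * (ω ‖ζ‖ / tl ν ‖ζ‖)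
  calc tl ν ‖a‖ * J = Real.pi * (Real.pi⁻¹ * J * tl ν ‖a‖) := by field_simp
    _ ≤ _ := by gcongr

/-- Proposition 3.2: `P_ω : L^∞_ν̂ → H^∞_ν̂` is bounded iff
`sup_{a∈𝔻} ν̂(a) ∫_𝔻 |B^ω_a(ζ)| ω(ζ)/ν̂(ζ) dA(ζ) < ∞`. -/
theorem stmt12 (ω ν : ℝ → ℝ) (hω : IsRadialWeight ω) (hν : IsRadialWeight ν) :
    ProjBddH ω (tl ν) ↔
      ∃ C : ℝ, ∀ a ∈ unitDisc,
        ENNReal.ofReal (tl ν ‖a‖) *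
          ∫⁻ ζ in unitDisc,
            ENNReal.ofReal (‖bKer ω a ζ‖ * (ω ‖ζ‖ / tl ν ‖ζ‖)) ≤
        ENNReal.ofReal C := by
  exact ⟨fwd hω hν, fun ⟨_, hC⟩ => bwd hω hν hC⟩
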